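/- arXiv:2511.12748 — 2 statements merged into one kernel-verified Lean document; each statement's English description precedes it below -/
import Mathlib

section
/- There exists a constant C > 0 such that for all real numbers s, t with 0 ≤ s and s ≤ t − 1, one has ∫ₛ^{t−1} (t−τ)^{−3/2} (1+τ)^{−3/2} dτ ≤ C · (1 + (t−s))^{−3/2}. -/
open MeasureTheory

/-!
The bases `t - τ` and `1 + τ` have the constant sum `1 + t`, so at each `τ` one of them is at least
the mean `m = (1 + t) / 2 ≥ (1 + (t - s)) / 2`. Replacing that factor by the corresponding power of
`m` leaves a single power of exponent below `-1` whose base is at least `1`, and its integral is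
bounded uniformly in `s` and `t`. Adding the two cases pointwise avoids splitting the domain of
integration.
-/

section Pointwise

variable {x y p q : ℝ}

lemma rpow_mul_rpow_le_midpoint_rpow (hx : 0 < x) (hy : 0 < y) (hp : p ≤ 0) (hq : q ≤ 0) :
    x ^ p * y ^ q ≤ ((x + y) / 2) ^ q * x ^ p + ((x + y) / 2) ^ p * y ^ q := by
  rcases le_total x y with hxy | hyx
  · have y_rpow_le : y ^ q ≤ ((x + y) / 2) ^ q :=
      Real.rpow_le_rpow_of_nonpos (by linarith) (by linarith) hq
    calc x ^ p * y ^ q = y ^ q * x ^ p := mul_comm _ _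
      _ ≤ ((x + y) / 2) ^ q * x ^ p := by gcongr
      _ ≤ _ := le_add_of_nonneg_right (by positivity)
  · have x_rpow_le : x ^ p ≤ ((x + y) / 2) ^ p :=
      Real.rpow_le_rpow_of_nonpos (by linarith) (by linarith) hp
    calc x ^ p * y ^ q ≤ ((x + y) / 2) ^ p * y ^ q := by gcongr
      _ ≤ _ := le_add_of_nonneg_left (by positivity)

lemma div_two_rpow_le (hx : 1 ≤ x) (hxy : x ≤ y) (hp : p ≤ 0) (hpq : p ≤ q) :
    (y / 2) ^ p ≤ 2 ^ (-p) * x ^ q :=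
  calc (y / 2) ^ p ≤ (x / 2) ^ p :=
        Real.rpow_le_rpow_of_nonpos (by linarith) (by linarith) hp
    _ = 2 ^ (-p) * x ^ p := by
        rw [Real.div_rpow (by linarith) zero_le_two, Real.rpow_neg zero_le_two, div_eq_inv_mul]
    _ ≤ 2 ^ (-p) * x ^ q := by gcongr

end Pointwise

section Integral

variable {a b c d p q r : ℝ}

lemma integral_rpow_le_of_lt_neg_one (hr : r < -1) (ha : 0 < a) (hab : a ≤ b) :
    ∫ x in a..b, x ^ r ≤ a ^ (r + 1) / -(r + 1) := by
  have hzero : (0 : ℝ) ∉ Set.uIcc a b := Set.notMem_uIcc_of_lt ha (ha.trans_le hab)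
  calc ∫ x in a..b, x ^ r = (b ^ (r + 1) - a ^ (r + 1)) / (r + 1) :=
        integral_rpow (Or.inr ⟨hr.ne, hzero⟩)
    _ = (a ^ (r + 1) - b ^ (r + 1)) / -(r + 1) := by rw [← neg_sub, neg_div, div_neg]
    _ ≤ a ^ (r + 1) / -(r + 1) := by
        have : 0 ≤ -(r + 1) := by linarith
        have : 0 ≤ b ^ (r + 1) := Real.rpow_nonneg (ha.le.trans hab) _
        gcongr
        linarith

lemma integral_sub_rpow_mul_add_rpow_le (hp : p < -1) (hq : q < -1)
    (hac : 0 < a + c) (hcd : c ≤ d) (hdb : d < b) :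
    ∫ x in c..d, (b - x) ^ p * (a + x) ^ q ≤
      ((a + b) / 2) ^ q * ((b - d) ^ (p + 1) / -(p + 1)) +
        ((a + b) / 2) ^ p * ((a + c) ^ (q + 1) / -(q + 1)) := by
  have sub_pos_on : ∀ x ∈ Set.Icc c d, 0 < b - x := fun x hx ↦ by linarith [hx.2]
  have add_pos_on : ∀ x ∈ Set.Icc c d, 0 < a + x := fun x hx ↦ by linarith [hx.1]
  have hcont_sub : ContinuousOn (fun x ↦ (b - x) ^ p) (Set.uIcc c d) := by
    rw [Set.uIcc_of_le hcd]
    exact ContinuousOn.rpow_const (by fun_prop) fun x hx ↦ Or.inl (sub_pos_on x hx).ne'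
  have hcont_add : ContinuousOn (fun x ↦ (a + x) ^ q) (Set.uIcc c d) := by
    rw [Set.uIcc_of_le hcd]
    exact ContinuousOn.rpow_const (by fun_prop) fun x hx ↦ Or.inl (add_pos_on x hx).ne'
  have hint_sub := hcont_sub.intervalIntegrable.const_mul (μ := volume) (((a + b) / 2) ^ q)
  have hint_add := hcont_add.intervalIntegrable.const_mul (μ := volume) (((a + b) / 2) ^ p)
  have pointwise : ∀ x ∈ Set.Icc c d, (b - x) ^ p * (a + x) ^ q ≤
      ((a + b) / 2) ^ q * (b - x) ^ p + ((a + b) / 2) ^ p * (a + x) ^ q := fun x hx ↦ by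
    have hsum : b - x + (a + x) = a + b := by ring
    simpa only [hsum] using rpow_mul_rpow_le_midpoint_rpow (sub_pos_on x hx) (add_pos_on x hx)
      (by linarith : p ≤ 0) (by linarith : q ≤ 0)
  have hmid : 0 ≤ (a + b) / 2 := by linarith
  calc ∫ x in c..d, (b - x) ^ p * (a + x) ^ q
      ≤ ∫ x in c..d, (((a + b) / 2) ^ q * (b - x) ^ p + ((a + b) / 2) ^ p * (a + x) ^ q) :=
        intervalIntegral.integral_mono_on hcd (hcont_sub.mul hcont_add).intervalIntegrable
          (hint_sub.add hint_add) pointwise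
    _ = ((a + b) / 2) ^ q * (∫ u in (b - d)..(b - c), u ^ p) +
          ((a + b) / 2) ^ p * ∫ u in (a + c)..(a + d), u ^ q := by
        rw [intervalIntegral.integral_add hint_sub hint_add,
          intervalIntegral.integral_const_mul, intervalIntegral.integral_const_mul,
          intervalIntegral.integral_comp_sub_left (fun u ↦ u ^ p),
          intervalIntegral.integral_comp_add_left (fun u ↦ u ^ q)]
    _ ≤ _ := by
        gcongr
        · exact integral_rpow_le_of_lt_neg_one hp (by linarith) (by linarith)
        · exact integral_rpow_le_of_lt_neg_one hq hac (by linarith)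

end Integral

theorem stmt_5_general {p q : ℝ} (hp : p < -1) (hq : q < -1) :
    ∃ C : ℝ, 0 < C ∧ ∀ s t : ℝ, 0 ≤ s → s ≤ t - 1 →
      (∫ τ in s..(t - 1), (t - τ) ^ p * (1 + τ) ^ q) ≤ C * (1 + (t - s)) ^ max p q := by
  have hp' : 0 < -(p + 1) := by linarith
  have hq' : 0 < -(q + 1) := by linarith
  refine ⟨2 ^ (-q) / -(p + 1) + 2 ^ (-p) / -(q + 1), by positivity, fun s t hs hst ↦ ?_⟩
  have hbase : 1 ≤ 1 + (t - s) := by linarith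
  have hmid_q : ((1 + t) / 2) ^ q ≤ 2 ^ (-q) * (1 + (t - s)) ^ max p q :=
    div_two_rpow_le hbase (by linarith) (by linarith) (le_max_right p q)
  have hmid_p : ((1 + t) / 2) ^ p ≤ 2 ^ (-p) * (1 + (t - s)) ^ max p q :=
    div_two_rpow_le hbase (by linarith) (by linarith) (le_max_left p q)
  have hleft : (t - (t - 1)) ^ (p + 1) = 1 := by rw [sub_sub_cancel, Real.one_rpow]
  have hright : (1 + s) ^ (q + 1) ≤ 1 :=
    Real.rpow_le_one_of_one_le_of_nonpos (by linarith) (by linarith)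
  calc ∫ τ in s..(t - 1), (t - τ) ^ p * (1 + τ) ^ q
      ≤ ((1 + t) / 2) ^ q * ((t - (t - 1)) ^ (p + 1) / -(p + 1)) +
          ((1 + t) / 2) ^ p * ((1 + s) ^ (q + 1) / -(q + 1)) :=
        integral_sub_rpow_mul_add_rpow_le hp hq (by linarith) hst (by linarith)
    _ ≤ 2 ^ (-q) * (1 + (t - s)) ^ max p q * (1 / -(p + 1)) +
          2 ^ (-p) * (1 + (t - s)) ^ max p q * (1 / -(q + 1)) := by
        rw [hleft]
        gcongr
    _ = _ := by ring

/-- The time-integral convolution estimate: there is a constant `C > 0`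
such that for all `0 ≤ s ≤ t − 1`,
`∫ₛ^{t−1} (t−τ)^{−3/2} (1+τ)^{−3/2} dτ ≤ C (1 + (t−s))^{−3/2}`. -/
theorem stmt_5 :
    ∃ C : ℝ, 0 < C ∧ ∀ s t : ℝ, 0 ≤ s → s ≤ t - 1 →
      (∫ τ in s..(t - 1), (t - τ) ^ (-(3/2) : ℝ) * (1 + τ) ^ (-(3/2) : ℝ)) ≤
        C * (1 + (t - s)) ^ (-(3/2) : ℝ) := by
  have hexp : (-(3/2) : ℝ) < -1 := by norm_num
  simpa only [max_self] using stmt_5_general hexp hexp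
end

section
/- Let s, t be real numbers with 0 ≤ s ≤ t, let C ≥ 0, and let f : ℝ → ℝ be continuous and nonnegative on [s, t], satisfying f(r)² ≤ C · ∫ᵣᵗ (1+τ)^{−3/2} f(τ) dτ for every r ∈ [s, t]. Then f(r) ≤ 2C · ( (1+r)^{−1/2} − (1+t)^{−1/2} ) for every r ∈ [s, t]. -/
open MeasureTheory

/-! A continuous `f` attains its maximum over `[r, t]` at some point `m`. Bounding `f` by `f m`
inside the integral turns `f m ^ 2 ≤ ∫ τ in m..t, w τ * f τ` into
`f m ^ 2 ≤ (∫ τ in m..t, w τ) * f m`. If `f m` is positive, dividing by it leaves the integral of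
the weight, which only grows when its domain is enlarged from `[m, t]` to `[r, t]`. -/

section QuadraticGronwall

variable {μ : Measure ℝ} {f w : ℝ → ℝ} {s t : ℝ}

lemma integral_mul_le_integral_mul_const {M : ℝ} (hst : s ≤ t)
    (hf : ContinuousOn f (Set.Icc s t)) (hw : IntervalIntegrable w μ s t)
    (hw_nonneg : ∀ τ ∈ Set.Icc s t, 0 ≤ w τ) (hfM : ∀ τ ∈ Set.Icc s t, f τ ≤ M) :
    ∫ τ in s..t, w τ * f τ ∂μ ≤ (∫ τ in s..t, w τ ∂μ) * M := by
  rw [← intervalIntegral.integral_mul_const]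
  refine intervalIntegral.integral_mono_on hst (hw.mul_continuousOn ?_) (hw.mul_const M)
    fun τ hτ ↦ mul_le_mul_of_nonneg_left (hfM τ hτ) (hw_nonneg τ hτ)
  rwa [Set.uIcc_of_le hst]

lemma le_integral_of_sq_le_integral_mul_of_isMaxOn (hst : s ≤ t)
    (hf : ContinuousOn f (Set.Icc s t)) (hw : IntervalIntegrable w μ s t)
    (hw_nonneg : ∀ τ ∈ Set.Icc s t, 0 ≤ w τ) (hmax : IsMaxOn f (Set.Icc s t) s)
    (hsq : f s ^ 2 ≤ ∫ τ in s..t, w τ * f τ ∂μ) :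
    f s ≤ ∫ τ in s..t, w τ ∂μ := by
  rcases le_or_gt (f s) 0 with hfs | hfs
  · exact hfs.trans (intervalIntegral.integral_nonneg hst hw_nonneg)
  · have hmul : f s * f s ≤ (∫ τ in s..t, w τ ∂μ) * f s := by
      rw [← sq]
      exact hsq.trans (integral_mul_le_integral_mul_const hst hf hw hw_nonneg hmax)
    exact le_of_mul_le_mul_right hmul hfs

theorem le_integral_of_sq_le_integral_mul (hf : ContinuousOn f (Set.Icc s t))
    (hw : IntervalIntegrable w μ s t) (hw_nonneg : ∀ τ ∈ Set.Icc s t, 0 ≤ w τ)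
    (hsq : ∀ r ∈ Set.Icc s t, f r ^ 2 ≤ ∫ τ in r..t, w τ * f τ ∂μ) :
    ∀ r ∈ Set.Icc s t, f r ≤ ∫ τ in r..t, w τ ∂μ := by
  intro r hr
  obtain ⟨m, hm, hmax⟩ := isCompact_Icc.exists_isMaxOn (Set.nonempty_Icc.2 hr.2)
    (hf.mono (Set.Icc_subset_Icc_left hr.1))
  have hw_tail {a : ℝ} (ha : a ∈ Set.Icc s t) : IntervalIntegrable w μ a t :=
    hw.mono_set (Set.uIcc_subset_uIcc_right (Set.Icc_subset_uIcc ha))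
  have hms : m ∈ Set.Icc s t := ⟨hr.1.trans hm.1, hm.2⟩
  have hms_subset : Set.Icc m t ⊆ Set.Icc s t := Set.Icc_subset_Icc_left hms.1
  have hw_nonneg_ae : 0 ≤ᵐ[μ.restrict (Set.Ioc r t)] w :=
    ae_restrict_of_forall_mem measurableSet_Ioc
      fun τ hτ ↦ hw_nonneg τ ⟨hr.1.trans hτ.1.le, hτ.2⟩
  calc
    f r ≤ f m := hmax (Set.left_mem_Icc.2 hr.2)
    _ ≤ ∫ τ in m..t, w τ ∂μ :=
      le_integral_of_sq_le_integral_mul_of_isMaxOn hm.2 (hf.mono hms_subset) (hw_tail hms)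
        (fun τ hτ ↦ hw_nonneg τ (hms_subset hτ))
        (hmax.on_subset (Set.Icc_subset_Icc_left hm.1)) (hsq m hms)
    _ ≤ ∫ τ in r..t, w τ ∂μ :=
      intervalIntegral.integral_mono_interval hm.1 hm.2 le_rfl hw_nonneg_ae (hw_tail hr)

end QuadraticGronwall

section ShiftedPower

variable {a b c p : ℝ}

lemma intervalIntegrable_const_add_rpow (h : 0 ≤ p ∨ 0 ∉ Set.uIcc (c + a) (c + b)) :
    IntervalIntegrable (fun τ ↦ (c + τ) ^ p) volume a b := by
  simpa using (intervalIntegral.intervalIntegrable_rpow (r := p) h).comp_add_left c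

lemma integral_const_add_rpow
    (h : -1 < p ∨ p ≠ -1 ∧ 0 ∉ Set.uIcc (c + a) (c + b)) :
    ∫ τ in a..b, (c + τ) ^ p = ((c + b) ^ (p + 1) - (c + a) ^ (p + 1)) / (p + 1) := by
  rw [intervalIntegral.integral_comp_add_left (fun x ↦ x ^ p), integral_rpow h]

end ShiftedPower

theorem stmt_6_general {s t C : ℝ} {f : ℝ → ℝ} (hs : -1 < s) (hC : 0 ≤ C)
    (hf : ContinuousOn f (Set.Icc s t))
    (hsq : ∀ r ∈ Set.Icc s t, f r ^ 2 ≤ C * ∫ τ in r..t, (1 + τ) ^ (-(3 / 2) : ℝ) * f τ) :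
    ∀ r ∈ Set.Icc s t,
      f r ≤ 2 * C * ((1 + r) ^ (-(1 / 2) : ℝ) - (1 + t) ^ (-(1 / 2) : ℝ)) := by
  intro r hr
  have zero_notMem {a : ℝ} (ha : a ∈ Set.Icc s t) : 0 ∉ Set.uIcc (1 + a) (1 + t) :=
    Set.notMem_uIcc_of_lt (by linarith [ha.1]) (by linarith [ha.1, ha.2])
  have hst : s ≤ t := hr.1.trans hr.2
  calc
    f r ≤ ∫ τ in r..t, C * (1 + τ) ^ (-(3 / 2) : ℝ) := by
      refine le_integral_of_sq_le_integral_mul hf ?_ ?_ ?_ r hr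
      · exact (intervalIntegrable_const_add_rpow
          (.inr (zero_notMem (Set.left_mem_Icc.2 hst)))).const_mul C
      · exact fun τ hτ ↦ mul_nonneg hC (Real.rpow_nonneg (by linarith [hτ.1]) _)
      · simpa only [mul_assoc, intervalIntegral.integral_const_mul] using hsq
    _ = 2 * C * ((1 + r) ^ (-(1 / 2) : ℝ) - (1 + t) ^ (-(1 / 2) : ℝ)) := by
      rw [intervalIntegral.integral_const_mul,
        integral_const_add_rpow (.inr ⟨by norm_num, zero_notMem hr⟩),
        show (-(3 / 2) + 1 : ℝ) = -(1 / 2) by norm_num]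
      ring

/-- The Grönwall-type argument used in Lemma 2.3: if a continuous
nonnegative `f` satisfies `f(r)² ≤ C ∫ᵣᵗ (1+τ)^{−3/2} f(τ) dτ` on `[s,t]`, then
`f(r) ≤ 2C ((1+r)^{−1/2} − (1+t)^{−1/2})` on `[s,t]`. -/
theorem stmt_6 (s t : ℝ) (hs : 0 ≤ s) (hst : s ≤ t) (C : ℝ) (hC : 0 ≤ C)
    (f : ℝ → ℝ)
    (hfc : ContinuousOn f (Set.Icc s t))
    (hfnn : ∀ r ∈ Set.Icc s t, 0 ≤ f r)
    (hineq : ∀ r ∈ Set.Icc s t,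
      f r ^ 2 ≤ C * ∫ τ in r..t, (1 + τ) ^ (-(3/2) : ℝ) * f τ) :
    ∀ r ∈ Set.Icc s t,
      f r ≤ 2 * C * ((1 + r) ^ (-(1/2) : ℝ) - (1 + t) ^ (-(1/2) : ℝ)) :=
  stmt_6_general (by linarith) hC hfc hineq
end
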